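/- Let n ≥ 2. The set of nontrivial solutions of x·a_1 = f in K_n admits the following explicit description: { x ∈ K_n : x·a_1 = f and x ≠ a_n a_{n-1} ⋯ a_2 } = { z · a_1 · (a_{m(z)} a_{m(z)-1} ⋯ a_2) : z in the submonoid of K_n generated by {a_2, …, a_n} }, where m(z) = min{ i ∈ {0, 1, …, n} : z·(a_i a_{i-1} ⋯ a_1) = f } and an empty descending product denotes the identity e. -/

import Mathlib

/-!
Reading a product from left to right while looking for the factors `a_t, a_{t-1}, …, a_1` in this
order defines a right action of `K n` on `ℕ`: a factor `a_t` sends the state `t` to `t - 1`, and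
every other state is fixed. Once `a_n ⋯ a_{k+1}` has been found, every further factor `a_i` with
`i > k` is absorbed, and a factor `a_i` that comes before its turn is absorbed by the descending
product still to be found. Hence a product `z` of letters from `a_n, …, a_{l+1}` equals
`a_n ⋯ a_{l+1}` exactly when it sends `n` to `l`. In particular `m(z)` is the image of `n` under
`z`.

Every `x` either lies in `upper n`, and then fixes `1`, or has the form `z a_1 v` with `z, v` in
`upper n`, since all occurrences of `a_1` but the last can be deleted, and then sends `1` to `0`.
If `x a_1 = f`, then the former case forces `x = a_n ⋯ a_2`, and in the latter `v` sends `m(z)` to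
`1`, which allows it to be replaced by `a_{m(z)} ⋯ a_2` after `z a_1`.
-/

namespace Kiselman

/-- The defining relations of Kiselman's semigroup on the free monoid over `Fin n`,
where the index `i : Fin n` represents the generator `a_{i+1}` (so letters are 0-based). -/
def Rel (n : ℕ) : FreeMonoid (Fin n) → FreeMonoid (Fin n) → Prop := fun u v =>
  (∃ i : Fin n, u = .of i * .of i ∧ v = .of i) ∨
  (∃ i j : Fin n, j < i ∧
    ((u = .of i * .of j * .of i ∧ v = .of i * .of j) ∨
     (u = .of j * .of i * .of j ∧ v = .of i * .of j)))

/-- Kiselman's semigroup (monoid) `K n`, presented by the relations `Rel n`. -/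
def K (n : ℕ) : Type := (conGen (Rel n)).Quotient

instance (n : ℕ) : Monoid (K n) := inferInstanceAs (Monoid (conGen (Rel n)).Quotient)

/-- The canonical epimorphism `φ` from the free monoid onto `K n`. -/
def phi (n : ℕ) : FreeMonoid (Fin n) →* K n := Con.mk' _

/-- `φ` applied to a word given as a list of (0-based) letters. -/
def phiL (n : ℕ) (w : List (Fin n)) : K n := phi n (FreeMonoid.ofList w)

/-- The generator `a_{i+1}` of `K n` (`i` is the 0-based index). -/
def gen {n : ℕ} (i : Fin n) : K n := phi n (FreeMonoid.of i)

/-- The word `a_hi a_{hi-1} ⋯ a_lo` (letters named 1-based), as a list of 0-based indices: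
`[hi-1, hi-2, …, lo-1]` (capped at `n`). -/
def descList (n lo hi : ℕ) : List (Fin n) :=
  ((List.finRange n).filter (fun k => decide (lo ≤ k.val + 1 ∧ k.val + 1 ≤ hi))).reverse

/-- The zero element `f = a_n a_{n-1} ⋯ a_2 a_1` of `K n`. -/
def fEl (n : ℕ) : K n := phiL n (descList n 1 n)

/-- A word `w` is canonical if for every factorization `w = p ++ [i] ++ u ++ [i] ++ q`
there are letters `j > i` and `k < i` occurring in `u`. -/
def Canonical {n : ℕ} (w : List (Fin n)) : Prop :=
  ∀ (p u q : List (Fin n)) (i : Fin n),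
    w = p ++ [i] ++ u ++ [i] ++ q →
    (∃ j ∈ u, i < j) ∧ (∃ k ∈ u, k < i)

/-- The submonoid of `K n` generated by `{a_2, a_3, …, a_n}`. -/
def upper (n : ℕ) : Submonoid (K n) := Submonoid.closure (gen '' {i : Fin n | i.val ≠ 0})

/-- The submonoid of `K n` generated by `{a_1, a_2, …, a_{n-1}}`. -/
def lower (n : ℕ) : Submonoid (K n) := Submonoid.closure (gen '' {i : Fin n | i.val + 1 ≠ n})

/-- `m(x) = min { i ∈ {0,…,n} : x ⬝ (a_i a_{i-1} ⋯ a_1) = f }`. -/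
noncomputable def mIdx {n : ℕ} (x : K n) : ℕ :=
  sInf {i : ℕ | x * phiL n (descList n 1 i) = fEl n}

section Generators

variable {n : ℕ}

lemma phi_eq_of_rel {u v : FreeMonoid (Fin n)} (h : Rel n u v) : phi n u = phi n v :=
  (Con.eq _).2 (ConGen.Rel.of _ _ h)

lemma gen_mul_self (i : Fin n) : gen i * gen i = gen i := by
  simpa only [gen, map_mul] using phi_eq_of_rel (n := n) (.inl ⟨i, rfl, rfl⟩)

lemma gen_mul_gen_mul_gen_of_gt {i j : Fin n} (h : j < i) :
    gen i * gen j * gen i = gen i * gen j := by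
  simpa only [gen, map_mul] using phi_eq_of_rel (n := n) (.inr ⟨i, j, h, .inl ⟨rfl, rfl⟩⟩)

lemma gen_mul_gen_mul_gen_of_lt {i j : Fin n} (h : j < i) :
    gen j * gen i * gen j = gen i * gen j := by
  simpa only [gen, map_mul] using phi_eq_of_rel (n := n) (.inr ⟨i, j, h, .inr ⟨rfl, rfl⟩⟩)

lemma closure_range_gen : Submonoid.closure (Set.range (gen : Fin n → K n)) = ⊤ := by
  have h : Set.range (gen : Fin n → K n) = phi n '' Set.range FreeMonoid.of := by
    rw [← Set.range_comp]; rfl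
  rw [h, ← MonoidHom.map_mclosure, FreeMonoid.closure_range_of, ← MonoidHom.mrange_eq_map]
  exact MonoidHom.mrange_eq_top.2 Con.mk'_surjective

lemma phiL_eq_prod_map_gen (w : List (Fin n)) : phiL n w = (w.map gen).prod := by
  induction w with
  | nil => rfl
  | cons i w ih => rw [List.map_cons, List.prod_cons, ← ih]; rfl

end Generators

section UpperFrom

variable {n : ℕ}

/-- The submonoid of `K n` generated by the letters `a_{l+1}, …, a_n`, so that `upperFrom n 1` is
`upper n`; the parameter counts the omitted letters. -/
def upperFrom (n l : ℕ) : Submonoid (K n) := Submonoid.closure (gen '' {i : Fin n | l ≤ i.val})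

lemma upper_eq_upperFrom_one : upper n = upperFrom n 1 := by
  simp only [upper, upperFrom, Nat.one_le_iff_ne_zero]

lemma mem_upperFrom_zero (x : K n) : x ∈ upperFrom n 0 := by
  simp [upperFrom, closure_range_gen]

lemma gen_mem_upperFrom {l : ℕ} {i : Fin n} (h : l ≤ i.val) : gen i ∈ upperFrom n l :=
  Submonoid.subset_closure ⟨i, h, rfl⟩

lemma upperFrom_antitone : Antitone (upperFrom n) := fun _ _ h =>
  Submonoid.closure_mono (Set.image_mono fun _ hi => h.trans hi)

lemma gen_mul_mul_gen {k : Fin n} {x : K n} (hx : x ∈ upperFrom n (k + 1)) :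
    gen k * x * gen k = x * gen k := by
  induction hx using Submonoid.closure_induction_left with
  | one => simp only [mul_one, one_mul, gen_mul_self]
  | mul_left _ hj y _ ih =>
    obtain ⟨j, hj, rfl⟩ := hj
    calc gen k * (gen j * y) * gen k
        = gen k * gen j * (y * gen k) := by simp only [mul_assoc]
      _ = gen k * gen j * gen k * (y * gen k) := by
        rw [mul_assoc _ (gen k), ← mul_assoc (gen k) y, ih]
      _ = gen j * (gen k * y * gen k) := by
        rw [gen_mul_gen_mul_gen_of_lt (Fin.lt_def.2 hj)]; simp only [mul_assoc]
      _ = gen j * y * gen k := by rw [ih, mul_assoc]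

lemma mem_upperFrom_succ_or_exists_eq_mul_gen_mul {k : Fin n} {x : K n}
    (hx : x ∈ upperFrom n k) :
    x ∈ upperFrom n (k + 1) ∨
      ∃ u ∈ upperFrom n (k + 1), ∃ v ∈ upperFrom n (k + 1), x = u * gen k * v := by
  induction hx using Submonoid.closure_induction_left with
  | one => exact .inl (one_mem _)
  | mul_left _ hi y _ ih =>
    obtain ⟨i, hi, rfl⟩ := hi
    rcases (Fin.le_def.2 hi).eq_or_lt with rfl | hki
    · right
      obtain hy | ⟨u, hu, v, hv, rfl⟩ := ih
      · exact ⟨1, one_mem _, y, hy, by rw [one_mul]⟩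
      · exact ⟨u, hu, v, hv, by rw [← mul_assoc, ← mul_assoc, gen_mul_mul_gen hu]⟩
    · have hi' := gen_mem_upperFrom (Nat.succ_le_of_lt hki)
      refine ih.imp (mul_mem hi') ?_
      rintro ⟨u, hu, v, hv, rfl⟩
      exact ⟨gen i * u, mul_mem hi' hu, v, hv, by simp only [mul_assoc]⟩

end UpperFrom

section Desc

variable {n : ℕ}

/-- The descending product `a_m a_{m-1} ⋯ a_{l+1}`, indexed so that it carries the state `m` of
`residual` to `l`; it is `1` if `m ≤ l`, and letters beyond `a_n` are dropped. -/
def desc (n l m : ℕ) : K n := phiL n (descList n (l + 1) m)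

lemma mem_descList {lo hi : ℕ} {i : Fin n} :
    i ∈ descList n lo hi ↔ lo ≤ i.val + 1 ∧ i.val + 1 ≤ hi := by
  simp only [descList, List.mem_reverse, List.mem_filter, List.mem_finRange, true_and,
    decide_eq_true_eq]

lemma pairwise_descList (lo hi : ℕ) : (descList n lo hi).Pairwise (· > ·) := by
  rw [descList, List.pairwise_reverse]
  exact (List.pairwise_lt_finRange n).filter _

lemma descList_succ {lo : ℕ} {k : Fin n} (h : lo ≤ k + 1) :
    descList n lo (k + 1) = k :: descList n lo k := by
  have hp : (k :: descList n lo k).Pairwise (· > ·) :=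
    List.pairwise_cons.2 ⟨fun i hi => Fin.lt_def.2 (mem_descList.1 hi).2, pairwise_descList _ _⟩
  refine (pairwise_descList _ _).eq_of_mem_iff hp fun i => ?_
  simp only [List.mem_cons, mem_descList, Fin.ext_iff]
  omega

lemma desc_of_le {l m : ℕ} (h : m ≤ l) : desc n l m = 1 := by
  have hnil : descList n (l + 1) m = [] := by
    refine List.eq_nil_iff_forall_not_mem.2 fun i hi => ?_
    have := mem_descList.1 hi
    omega
  rw [desc, hnil]
  rfl

lemma desc_succ {l : ℕ} {k : Fin n} (h : l ≤ k) : desc n l (k + 1) = gen k * desc n l k := by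
  rw [desc, descList_succ (Nat.succ_le_succ h)]
  simp only [desc, phiL_eq_prod_map_gen, List.map_cons, List.prod_cons]

lemma desc_mem_upperFrom (l m : ℕ) : desc n l m ∈ upperFrom n l := by
  rw [desc, phiL_eq_prod_map_gen]
  refine Submonoid.list_prod_mem _ (List.forall_mem_map.2 fun i hi => gen_mem_upperFrom ?_)
  exact Nat.le_of_succ_le_succ (mem_descList.1 hi).1

lemma gen_mul_desc {l m : ℕ} {k : Fin n} (hl : l ≤ k) (hk : k < m) (hm : m ≤ n) :
    gen k * desc n l m = desc n l m := by
  induction m with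
  | zero => omega
  | succ m ih =>
    lift m to Fin n using hm
    rw [desc_succ (by omega), ← mul_assoc]
    rcases (Fin.le_def.2 (Nat.le_of_lt_succ hk)).eq_or_lt with rfl | hkm
    · rw [gen_mul_self]
    · have hdesc := ih hkm m.isLt.le
      calc gen k * gen m * desc n l m
          = gen k * gen m * gen k * desc n l m := by rw [mul_assoc _ (gen k), hdesc]
        _ = gen m * desc n l m := by rw [gen_mul_gen_mul_gen_of_lt hkm, mul_assoc, hdesc]

end Desc

section Residual

variable {n : ℕ}

/-- The effect of reading the letter `a_{i+1}` while looking for `a_t` as the next letter. -/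
def advance (i : Fin n) : Function.End ℕ := fun t => if t = i + 1 then i else t

lemma lift_advance_eq_of_rel {u v : FreeMonoid (Fin n)} (h : Rel n u v) :
    FreeMonoid.lift (fun i => MulOpposite.op (advance i)) u =
      FreeMonoid.lift (fun i => MulOpposite.op (advance i)) v := by
  have mul_apply (g h : Function.End ℕ) (t : ℕ) : (g * h) t = g (h t) := rfl
  rcases h with ⟨i, rfl, rfl⟩ | ⟨i, j, hij, ⟨rfl, rfl⟩ | ⟨rfl, rfl⟩⟩ <;>
  · simp only [map_mul, FreeMonoid.lift_eval_of, ← MulOpposite.op_mul]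
    congr 1
    funext t
    simp only [mul_apply, advance]
    grind

/-- The right action of `K n` on `ℕ` in which `a_{i+1}` acts by `advance i`, as a homomorphism to
the opposite of the monoid of self-maps of `ℕ`. -/
def residualHom (n : ℕ) : K n →* (Function.End ℕ)ᵐᵒᵖ :=
  Con.lift _ (FreeMonoid.lift fun i => MulOpposite.op (advance i)) <|
    Con.conGen_le.2 fun _ _ h => lift_advance_eq_of_rel h

/-- The state of the search for `a_t, a_{t-1}, …, a_1`, in this order and not necessarily
adjacent, after reading `x` from left to right: `a_s, …, a_1` are still to be found, where
`s = residual x t`. -/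
def residual (x : K n) (t : ℕ) : ℕ := (residualHom n x).unop t

lemma residual_one (t : ℕ) : residual (1 : K n) t = t := by
  rw [residual, map_one]; rfl

lemma residual_mul (x y : K n) (t : ℕ) : residual (x * y) t = residual y (residual x t) := by
  rw [residual, map_mul]; rfl

lemma residual_gen (i : Fin n) (t : ℕ) : residual (gen i) t = if t = i + 1 then i.val else t :=
  rfl

lemma residual_le (x : K n) (t : ℕ) : residual x t ≤ t := by
  induction x using Submonoid.induction_of_closure_eq_top_right closure_range_gen with
  | one => rw [residual_one]
  | mul_right x _ hi ih =>
    obtain ⟨i, rfl⟩ := hi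
    rw [residual_mul, residual_gen]
    split_ifs <;> omega

lemma le_residual {l t : ℕ} {x : K n} (hx : x ∈ upperFrom n l) (ht : l ≤ t) :
    l ≤ residual x t := by
  induction hx using Submonoid.closure_induction_right with
  | one => rwa [residual_one]
  | mul_right x _ _ hi ih =>
    obtain ⟨i, hi, rfl⟩ := hi
    rw [residual_mul, residual_gen]
    split_ifs
    exacts [hi, ih]

lemma residual_desc {l m : ℕ} (hm : m ≤ n) (t : ℕ) :
    residual (desc n l m) t = if l ≤ t ∧ t ≤ m then l else t := by
  induction m generalizing t with
  | zero => rw [desc_of_le l.zero_le, residual_one]; grind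
  | succ k ih =>
    rcases le_or_gt l k with hl | hl
    · lift k to Fin n using hm
      rw [desc_succ hl, residual_mul, residual_gen, ih k.isLt.le]
      grind
    · rw [desc_of_le hl, residual_one]; grind

lemma mul_gen_mul_notMem_upperFrom (u v : K n) (k : Fin n) :
    u * gen k * v ∉ upperFrom n (k + 1) := by
  intro h
  have hlow : k + 1 ≤ residual v (residual (gen k) (residual u (k + 1))) := by
    simpa only [residual_mul] using le_residual h le_rfl
  have hu := residual_le u (k + 1)
  have hv := residual_le v (residual (gen k) (residual u (k + 1)))
  rw [residual_gen] at hlow hv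
  split_ifs at hlow hv <;> omega

lemma mul_gen_eq_self {y : K n} {k : Fin n} (h : residual y n ≤ k) : y * gen k = y := by
  induction y using Submonoid.induction_of_closure_eq_top_right closure_range_gen
    generalizing k with
  | one => rw [residual_one] at h; omega
  | mul_right y _ hi ih =>
    obtain ⟨i, rfl⟩ := hi
    rcases eq_or_ne i k with rfl | hik
    · rw [mul_assoc, gen_mul_self]
    have hy : residual y n ≤ k := by
      rw [residual_mul, residual_gen] at h
      have := Fin.val_ne_of_ne hik
      split_ifs at h <;> omega
    rcases hik.lt_or_gt with hlt | hgt
    · calc y * gen i * gen k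
          = y * (gen k * gen i * gen k) := by rw [← mul_assoc, ← mul_assoc, ih hy]
        _ = y * gen i := by rw [gen_mul_gen_mul_gen_of_gt hlt, ← mul_assoc, ih hy]
    · rw [ih (hy.trans (Fin.le_def.1 hgt.le)), ih hy]

lemma mul_mul_desc_residual {l m : ℕ} {y z : K n} (hm : m ≤ n) (hy : residual y n ≤ m)
    (hz : z ∈ upperFrom n l) : y * (z * desc n l (residual z m)) = y * desc n l m := by
  induction hz using Submonoid.closure_induction_left generalizing m y with
  | one => rw [residual_one, one_mul]
  | mul_left _ hk z _ ih =>
    obtain ⟨k, hk, rfl⟩ := hk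
    have hyk : residual (y * gen k) n ≤ m := by
      rw [residual_mul]
      exact (residual_le _ _).trans hy
    rw [residual_mul, residual_gen, mul_assoc, ← mul_assoc]
    split_ifs with h
    · subst h
      have hyk' : residual (y * gen k) n ≤ k := by
        rw [residual_mul, residual_gen]
        split_ifs <;> omega
      rw [ih k.isLt.le hyk', desc_succ hk, mul_assoc]
    · rcases lt_or_ge k.val m with hkm | hmk
      · rw [ih hm hyk, mul_assoc, gen_mul_desc hk hkm hm]
      · rw [mul_gen_eq_self (hy.trans hmk), ih hm hy]

lemma mul_eq_mul_desc {l m : ℕ} {y z : K n} (hm : m ≤ n) (hy : residual y n ≤ m)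
    (hz : z ∈ upperFrom n l) (h : residual z m = l) : y * z = y * desc n l m := by
  rw [← mul_mul_desc_residual hm hy hz, h, desc_of_le le_rfl, mul_one]

lemma eq_desc_iff_residual_eq {l : ℕ} {x : K n} (hl : l ≤ n) (hx : x ∈ upperFrom n l) :
    x = desc n l n ↔ residual x n = l := by
  constructor
  · rintro rfl
    rw [residual_desc le_rfl, if_pos ⟨hl, le_rfl⟩]
  · intro h
    simpa only [one_mul] using mul_eq_mul_desc le_rfl (residual_le 1 n) hx h

lemma mIdx_eq_residual (z : K n) : mIdx z = residual z n := by
  have mem_iff (i : ℕ) : z * desc n 0 i = fEl n ↔ residual (desc n 0 i) (residual z n) = 0 := by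
    rw [← residual_mul]
    exact eq_desc_iff_residual_eq n.zero_le (mem_upperFrom_zero _)
  refine IsLeast.csInf_eq ⟨(mem_iff _).2 ?_, fun i hi => ?_⟩
  · rw [residual_desc (residual_le z n), if_pos ⟨Nat.zero_le _, le_rfl⟩]
  · by_contra! hlt
    have h := (mem_iff i).1 hi
    rw [residual_desc (hlt.le.trans (residual_le z n)), if_neg (by omega)] at h
    omega

end Residual

section Equation

variable {n : ℕ} {k : Fin n}

lemma mul_gen_eq_desc_iff {x : K n} (hx : x ∈ upperFrom n (k + 1)) :
    x * gen k = desc n k n ↔ x = desc n (k + 1) n := by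
  have hxk : x * gen k ∈ upperFrom n k :=
    mul_mem (upperFrom_antitone (Nat.le_succ _) hx) (gen_mem_upperFrom le_rfl)
  have hle : k + 1 ≤ residual x n := le_residual hx k.isLt
  rw [eq_desc_iff_residual_eq k.isLt.le hxk, eq_desc_iff_residual_eq k.isLt hx, residual_mul,
    residual_gen]
  split_ifs <;> omega

lemma mul_gen_mul_mul_gen_eq_desc_iff {u v : K n} (hu : u ∈ upperFrom n (k + 1))
    (hv : v ∈ upperFrom n (k + 1)) :
    u * gen k * v * gen k = desc n k n ↔
      u * gen k * v = u * gen k * desc n (k + 1) (residual u n) := by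
  have solves_iff {w : K n} (hw : w ∈ upperFrom n (k + 1)) :
      u * gen k * w * gen k = desc n k n ↔ residual w (residual u n) = k + 1 := by
    rw [mul_assoc u, mul_assoc u, gen_mul_mul_gen hw, ← mul_assoc,
      mul_gen_eq_desc_iff (mul_mem hu hw), eq_desc_iff_residual_eq k.isLt (mul_mem hu hw),
      residual_mul]
  constructor
  · intro h
    have hle : residual (u * gen k) n ≤ residual u n := by
      rw [residual_mul]
      exact residual_le _ _
    exact mul_eq_mul_desc (residual_le u n) hle hv ((solves_iff hv).1 h)
  · intro h
    rw [h, solves_iff (desc_mem_upperFrom _ _), residual_desc (residual_le u n),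
      if_pos ⟨le_residual hu k.isLt, le_rfl⟩]

end Equation

/-- Explicit description of the nontrivial solutions of `x * a_1 = f`:
they are exactly the elements `z ⬝ a_1 ⬝ (a_{m(z)} a_{m(z)-1} ⋯ a_2)` with `z` in the
submonoid generated by `a_2, …, a_n`. -/
theorem nontrivial_solutions (n : ℕ) (hn : 2 ≤ n) :
    {x : K n | x * gen ⟨0, by omega⟩ = fEl n ∧ x ≠ phiL n (descList n 2 n)} =
    {x : K n | ∃ z ∈ upper n,
      x = z * gen ⟨0, by omega⟩ * phiL n (descList n 2 (mIdx z))} := by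
  set k : Fin n := ⟨0, by omega⟩
  rw [upper_eq_upperFrom_one]
  ext x
  constructor
  · rintro ⟨hx, hne⟩
    obtain hx' | ⟨z, hz, v, hv, rfl⟩ :=
      mem_upperFrom_succ_or_exists_eq_mul_gen_mul (k := k) (mem_upperFrom_zero x)
    · exact absurd ((mul_gen_eq_desc_iff hx').1 hx) hne
    · refine ⟨z, hz, ?_⟩
      rw [mIdx_eq_residual]
      exact (mul_gen_mul_mul_gen_eq_desc_iff hz hv).1 hx
  · rintro ⟨z, hz, rfl⟩
    rw [mIdx_eq_residual]
    have hdesc (m : ℕ) : desc n 1 m ∈ upperFrom n 1 := desc_mem_upperFrom 1 m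
    exact ⟨(mul_gen_mul_mul_gen_eq_desc_iff (k := k) hz (hdesc _)).2 rfl,
      (ne_of_mem_of_not_mem (hdesc n) (mul_gen_mul_notMem_upperFrom z _ k)).symm⟩

end Kiselman
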